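/- (Proposition 5.1, bound (5.3)) In the setting of the adaptive estimation scheme — a good pair (D, F), nested nonempty convex compact sets X¹ ⊆ ⋯ ⊆ X^K ⊆ ℝⁿ with A(X^K) ⊆ M, g ∈ ℝⁿ, ε ∈ (0, 1/4), δ > 0, component estimates ĝ^k with sup_{x∈X^k} Prob{|ĝ^k(ω) − gᵀx| > Φ_*^k(ln(2K/ε)) + δ} < ε/K, and the Lepskii-type adaptive estimate ĝ(ω) = ĝ^{k(ω)}(ω) built from them — the ε-risk of ĝ on each X^k satisfies, for all k with 1 ≤ k ≤ K: Risk^k(ĝ; ε) ≤ [6·ln(2K/ε)/ln(1/(4ε))]·Risk_*^k(ε) + 3δ, where Risk^k(ĝ; ε) is the ε-risk of ĝ over X^k and Risk_*^k(ε) is the minimax optimal ε-risk of recovering gᵀx over X^k. -/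

import Mathlib

open MeasureTheory Real Matrix Set
open scoped ENNReal

/-- A "good pair" `(𝒟, ℱ)` in the sense of Juditsky–Nemirovski:
a parametric family of positive probability densities `p μ`, `μ ∈ M`, on `(Ω, P)`,
together with a finite-dimensional linear space `F` of Borel functions on `Ω`
containing the constants, such that log-likelihood ratios belong to `F` and
`μ ↦ ln ∫ e^{φ} p_μ dP` is well defined (finite, witnessed by integrability)
and concave on `M` for every `φ ∈ F`. -/
structure GoodPair (Ω : Type*) [MeasurableSpace Ω] (P : Measure Ω)
    (E : Type*) [NormedAddCommGroup E] [NormedSpace ℝ E] where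
  M : Set E
  p : E → Ω → ℝ
  F : Submodule ℝ (Ω → ℝ)
  M_open : IsOpen M
  M_convex : Convex ℝ M
  p_meas : ∀ μ ∈ M, Measurable (p μ)
  p_pos : ∀ μ ∈ M, ∀ ω, 0 < p μ ω
  p_prob : ∀ μ ∈ M, ∫ ω, p μ ω ∂P = 1
  F_fd : FiniteDimensional ℝ F
  F_meas : ∀ φ ∈ F, Measurable φ
  F_const : ∀ c : ℝ, (fun _ : Ω => c) ∈ F
  logratio_mem : ∀ μ ∈ M, ∀ ν ∈ M, (fun ω => Real.log (p μ ω / p ν ω)) ∈ F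
  F_finite : ∀ φ ∈ F, ∀ μ ∈ M, Integrable (fun ω => Real.exp (φ ω) * p μ ω) P
  F_concave : ∀ φ ∈ F,
    ConcaveOn ℝ M (fun μ => Real.log (∫ ω, Real.exp (φ ω) * p μ ω ∂P))

variable {Ω : Type*} [MeasurableSpace Ω] {P : Measure Ω}
  {E : Type*} [NormedAddCommGroup E] [NormedSpace ℝ E] {n : ℕ}

/-- The distribution of the observation when the parameter is `μ`:
the measure with density `p μ` with respect to `P`. -/
noncomputable def obsMeasure (D : GoodPair Ω P E) (μ : E) : Measure Ω :=
  P.withDensity fun ω => ENNReal.ofReal (D.p μ ω)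

/-- The `ε`-risk of an estimate `ghat` of the linear form `gᵀx`, `x ∈ X`:
`inf {δ | sup_{x ∈ X} Prob_{ω ∼ p_{A(x)}·P} {|ghat ω - gᵀx| > δ} < ε}`. -/
noncomputable def Risk (D : GoodPair Ω P E) (A : (Fin n → ℝ) →ᵃ[ℝ] E)
    (g : Fin n → ℝ) (X : Set (Fin n → ℝ)) (ghat : Ω → ℝ) (ε : ℝ) : ℝ :=
  sInf {δ : ℝ |
    (⨆ x ∈ X, obsMeasure D (A x) {ω | δ < |ghat ω - g ⬝ᵥ x|}) < ENNReal.ofReal ε}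

/-- The minimax optimal `ε`-risk over all (Borel) estimates. -/
noncomputable def RiskStar (D : GoodPair Ω P E) (A : (Fin n → ℝ) →ᵃ[ℝ] E)
    (g : Fin n → ℝ) (X : Set (Fin n → ℝ)) (ε : ℝ) : ℝ :=
  sInf {ρ : ℝ | ∃ ghat : Ω → ℝ, Measurable ghat ∧ ρ = Risk D A g X ghat ε}

/-- The minimax optimal `ε`-risk over affine estimates, i.e. estimates `φ ∈ F`. -/
noncomputable def RiskAff (D : GoodPair Ω P E) (A : (Fin n → ℝ) →ᵃ[ℝ] E)
    (g : Fin n → ℝ) (X : Set (Fin n → ℝ)) (ε : ℝ) : ℝ :=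
  sInf {ρ : ℝ | ∃ φ ∈ D.F, ρ = Risk D A g X φ ε}

/-- The function `Φ_r(x, y; φ, α)`. -/
noncomputable def PhiFun (D : GoodPair Ω P E) (A : (Fin n → ℝ) →ᵃ[ℝ] E)
    (g : Fin n → ℝ) (r : ℝ) (x y : Fin n → ℝ) (φ : Ω → ℝ) (α : ℝ) : ℝ :=
  g ⬝ᵥ x - g ⬝ᵥ y
    + α * Real.log (∫ ω, Real.exp (φ ω / α) * D.p (A y) ω ∂P)
    + α * Real.log (∫ ω, Real.exp (-φ ω / α) * D.p (A x) ω ∂P)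
    + 2 * α * r

/-- `Φ_*(r)` defined through the sup-inf value:
`2Φ_*(r) = sup_{x,y ∈ X} inf_{φ ∈ F, α > 0} Φ_r(x, y; φ, α)`. -/
noncomputable def PhiStarSI (D : GoodPair Ω P E) (A : (Fin n → ℝ) →ᵃ[ℝ] E)
    (g : Fin n → ℝ) (X : Set (Fin n → ℝ)) (r : ℝ) : ℝ :=
  (1/2) * sSup {v : ℝ | ∃ x ∈ X, ∃ y ∈ X,
    v = sInf {w : ℝ | ∃ φ ∈ D.F, ∃ α : ℝ, 0 < α ∧ w = PhiFun D A g r x y φ α}}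

/-- `Φ_*(r)` defined through the inf-sup value:
`2Φ_*(r) = inf_{φ ∈ F, α > 0} sup_{x,y ∈ X} Φ_r(x, y; φ, α)`. -/
noncomputable def PhiStarIS (D : GoodPair Ω P E) (A : (Fin n → ℝ) →ᵃ[ℝ] E)
    (g : Fin n → ℝ) (X : Set (Fin n → ℝ)) (r : ℝ) : ℝ :=
  (1/2) * sInf {v : ℝ | ∃ φ ∈ D.F, ∃ α : ℝ, 0 < α ∧
    v = sSup {w : ℝ | ∃ x ∈ X, ∃ y ∈ X, w = PhiFun D A g r x y φ α}}

/-- `k` is an `ω`-good index for the family of estimates `ghatk` with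
thresholds `thresh`: `|ĝ^{k'}(ω) − ĝ^k(ω)| ≤ thresh k + thresh k' + 2δ`
for all `k ≤ k' < K`. -/
def isGoodIdx {Ω' : Type*} (K : ℕ) (ghatk : ℕ → Ω' → ℝ) (thresh : ℕ → ℝ)
    (δ : ℝ) (ω : Ω') (k : ℕ) : Prop :=
  k < K ∧ ∀ k', k ≤ k' → k' < K →
    |ghatk k' ω - ghatk k ω| ≤ thresh k + thresh k' + 2 * δ

/-- The smallest `ω`-good index. -/
noncomputable def kSel {Ω' : Type*} (K : ℕ) (ghatk : ℕ → Ω' → ℝ) (thresh : ℕ → ℝ)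
    (δ : ℝ) (ω : Ω') : ℕ :=
  sInf {k | isGoodIdx K ghatk thresh δ ω k}

/-- The Lepskii-type adaptive estimate `ĝ(ω) = ĝ^{k(ω)}(ω)`. -/
noncomputable def adaptEst {Ω' : Type*} (K : ℕ) (ghatk : ℕ → Ω' → ℝ)
    (thresh : ℕ → ℝ) (δ : ℝ) (ω : Ω') : ℝ :=
  ghatk (kSel K ghatk thresh δ ω) ω

/-- A minimax alternative: if `f` is continuous and concave in `x` on a compact convex set `s` and
convex in `w` on `T`, and no `x ∈ s` has `f x w ≥ c` for all `w ∈ T`, then some `w ∈ T` has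
`f x w ≤ c` for all `x ∈ s`. No topology on `T` is needed. -/
theorem exists_forall_le_of_forall_exists_lt {V W : Type*} [AddCommGroup V] [Module ℝ V]
    [TopologicalSpace V] [AddCommGroup W] [Module ℝ W] {s : Set V} {T : Set W} {f : V → W → ℝ}
    {c : ℝ} (hs : IsCompact s) (hne : s.Nonempty)
    (hcont : ∀ w ∈ T, ContinuousOn (fun x => f x w) s)
    (hconc : ∀ w ∈ T, ConcaveOn ℝ s fun x => f x w)
    (hconv : ∀ x ∈ s, ConvexOn ℝ T (f x)) (hlt : ∀ x ∈ s, ∃ w ∈ T, f x w < c) :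
    ∃ w ∈ T, ∀ x ∈ s, f x w ≤ c := by
  classical
  obtain ⟨t, htT, ht⟩ : ∃ t : Finset W, ↑t ⊆ T ∧ ∀ x ∈ s, ∃ w ∈ t, f x w < c := by
    refine hs.induction_on (p := fun s' => ∃ t : Finset W, ↑t ⊆ T ∧ ∀ x ∈ s', ∃ w ∈ t, f x w < c)
      ⟨∅, by simp, by simp⟩ ?_ ?_ ?_
    · rintro a b hab ⟨t, h1, h2⟩
      exact ⟨t, h1, fun x hx => h2 x (hab hx)⟩
    · rintro a b ⟨t, h1, h2⟩ ⟨t', h1', h2'⟩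
      refine ⟨t ∪ t', by simp [h1, h1'], ?_⟩
      rintro x (hx | hx)
      · obtain ⟨w, hw, h⟩ := h2 x hx
        exact ⟨w, Finset.mem_union_left _ hw, h⟩
      · obtain ⟨w, hw, h⟩ := h2' x hx
        exact ⟨w, Finset.mem_union_right _ hw, h⟩
    · intro x hx
      obtain ⟨w, hw, h⟩ := hlt x hx
      refine ⟨{y | f y w < c}, (hcont w hw x hx).eventually_lt_const h, {w}, by simpa using hw, ?_⟩
      intro y hy
      exact ⟨w, by simp, hy⟩
  have hO : Convex ℝ (Set.pi univ fun _ : t => Ioi c) := convex_pi fun _ _ => convex_Ioi c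
  have hOo : IsOpen (Set.pi univ fun _ : t => Ioi c) :=
    isOpen_set_pi finite_univ fun _ _ => isOpen_Ioi
  have hC : Convex ℝ {u : t → ℝ | ∃ x ∈ s, ∀ i, u i ≤ f x i} := by
    rintro u ⟨x, hx, hu⟩ v ⟨y, hy, hv⟩ a b ha hb hab
    obtain ⟨w₀, hw₀, -⟩ := hlt x hx
    refine ⟨a • x + b • y, (hconc w₀ hw₀).1 hx hy ha hb hab, fun i => ?_⟩
    have h := (hconc i (htT i.2)).2 hx hy ha hb hab
    simp only [smul_eq_mul, Pi.add_apply, Pi.smul_apply] at h ⊢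
    nlinarith [mul_le_mul_of_nonneg_left (hu i) ha, mul_le_mul_of_nonneg_left (hv i) hb]
  have hdisj : Disjoint (Set.pi univ fun _ : t => Ioi c)
      {u : t → ℝ | ∃ x ∈ s, ∀ i, u i ≤ f x i} := by
    rw [Set.disjoint_left]
    rintro u hu ⟨x, hx, hux⟩
    obtain ⟨w, hw, hlt⟩ := ht x hx
    have h1 : c < u ⟨w, hw⟩ := hu ⟨w, hw⟩ (mem_univ _)
    have h2 := hux ⟨w, hw⟩
    simp only at h2
    linarith
  obtain ⟨l, a, hl₁, hl₂⟩ := geometric_hahn_banach_open hO hOo hC hdisj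
  set e : t → ℝ := fun i => l (Pi.single i 1) with he
  have hl : ∀ u : t → ℝ, l u = ∑ i, u i * e i := fun u => by
    have h := LinearMap.pi_apply_eq_sum_univ l.toLinearMap u
    simp only [smul_eq_mul, ContinuousLinearMap.coe_coe] at h
    rw [h]
    refine Finset.sum_congr rfl fun i _ => ?_
    congr 2
    ext j
    simp [Pi.single_apply, eq_comm]
  have hconst : ∀ η > 0, (c + η) * ∑ i, e i < a := fun η hη => by
    have h := hl₁ (fun _ => c + η) (by intro i _; simp only [mem_Ioi]; linarith)
    rwa [hl, ← Finset.mul_sum] at h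
  have he0 : ∀ i, e i ≤ 0 := by
    intro i
    by_contra! hi
    have hτ : ∀ τ > 0, (c + 1) * ∑ i, e i + τ * e i < a := fun τ hτ => by
      have h := hl₁ ((fun _ => c + 1) + τ • Pi.single i 1) (by
        intro j _
        have : 0 ≤ (Pi.single i 1 : t → ℝ) j := by
          rw [Pi.single_apply]; split_ifs <;> norm_num
        simp only [mem_Ioi, Pi.add_apply, Pi.smul_apply, smul_eq_mul]
        nlinarith [mul_nonneg hτ.le this])
      rw [map_add, map_smul, hl, ← Finset.mul_sum, smul_eq_mul] at h
      exact h
    have h1 := hτ ((|a - (c + 1) * ∑ i, e i| + 1) / e i) (by positivity)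
    rw [div_mul_cancel₀ _ hi.ne'] at h1
    linarith [le_abs_self (a - (c + 1) * ∑ i, e i)]
  obtain ⟨x₀, hx₀⟩ := hne
  have hfx : ∀ x ∈ s, a ≤ ∑ i : t, f x i * e i := fun x hx => by
    rw [← hl fun i : t => f x i]
    exact hl₂ _ ⟨x, hx, fun _ => le_rfl⟩
  have hneg : ∑ i, e i < 0 := by
    refine lt_of_le_of_ne (Finset.sum_nonpos fun i _ => he0 i) fun h0 => ?_
    have hz : ∀ i, e i = 0 := fun i =>
      (Finset.sum_eq_zero_iff_of_nonpos fun i _ => he0 i).1 h0 i (Finset.mem_univ i)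
    have h1 := hconst 1 one_pos
    have h2 := hfx x₀ hx₀
    simp only [hz, mul_zero, Finset.sum_const_zero] at h1 h2
    linarith
  have hca : c * ∑ i, e i ≤ a := by
    by_contra! h
    have h1 := hconst ((c * ∑ i, e i - a) / -∑ i, e i) (div_pos (by linarith) (by linarith))
    have : (c * ∑ i, e i - a) / (-∑ i, e i) * ∑ i, e i = -(c * ∑ i, e i - a) := by
      rw [div_neg, neg_mul, div_mul_cancel₀ _ hneg.ne]
    rw [add_mul, this] at h1
    linarith
  have hw0 : ∀ i ∈ (Finset.univ : Finset t), 0 ≤ e i / ∑ j, e j := fun i _ =>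
    div_nonneg_of_nonpos (he0 i) hneg.le
  have hw1 : ∑ i, e i / ∑ j, e j = 1 := by rw [← Finset.sum_div, div_self hneg.ne]
  have hT : ∀ i ∈ (Finset.univ : Finset t), (i : W) ∈ T := fun i _ => htT i.2
  refine ⟨∑ i, (e i / ∑ j, e j) • (i : W), (hconv x₀ hx₀).1.sum_mem hw0 hw1 hT, fun x hx => ?_⟩
  refine ((hconv x hx).map_sum_le hw0 hw1 hT).trans ?_
  have h : ∑ i : t, (e i / ∑ j, e j) • f x i = (∑ i : t, f x i * e i) / ∑ j, e j := by
    rw [Finset.sum_div]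
    exact Finset.sum_congr rfl fun i _ => by rw [smul_eq_mul]; ring
  rw [h, div_le_iff_of_neg hneg]
  exact hca.trans (hfx x hx)

/-- Cauchy–Schwarz for square roots of integrable functions. -/
theorem integral_sqrt_mul_le {Q : Measure Ω} {u v : Ω → ℝ} (hu : Measurable u) (hv : Measurable v)
    (hu0 : ∀ ω, 0 ≤ u ω) (hv0 : ∀ ω, 0 ≤ v ω) (hui : Integrable u Q) (hvi : Integrable v Q) :
    ∫ ω, √(u ω * v ω) ∂Q ≤ √(∫ ω, u ω ∂Q) * √(∫ ω, v ω ∂Q) := by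
  have hL : ∀ {w : Ω → ℝ}, Measurable w → (∀ ω, 0 ≤ w ω) → Integrable w Q →
      MemLp (fun ω => √(w ω)) (ENNReal.ofReal 2) Q := fun {w} hw hw0 hwi => by
    rw [show ENNReal.ofReal 2 = 2 by simp, memLp_two_iff_integrable_sq hw.sqrt.aestronglyMeasurable]
    simpa only [Real.sq_sqrt (hw0 _)] using hwi
  have h := integral_mul_le_Lp_mul_Lq_of_nonneg (μ := Q) Real.HolderConjugate.two_two
    (f := fun ω => √(u ω)) (g := fun ω => √(v ω))
    (Filter.Eventually.of_forall fun ω => Real.sqrt_nonneg _)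
    (Filter.Eventually.of_forall fun ω => Real.sqrt_nonneg _) (hL hu hu0 hui) (hL hv hv0 hvi)
  simp only [Real.rpow_two, Real.sq_sqrt (hu0 _), Real.sq_sqrt (hv0 _), ← Real.sqrt_eq_rpow] at h
  simpa only [Real.sqrt_mul (hu0 _)] using h

theorem integrable_sqrt_mul {Q : Measure Ω} {u v : Ω → ℝ} (hu : Measurable u) (hv : Measurable v)
    (hu0 : ∀ ω, 0 ≤ u ω) (hv0 : ∀ ω, 0 ≤ v ω) (hui : Integrable u Q) (hvi : Integrable v Q) :
    Integrable (fun ω => √(u ω * v ω)) Q := by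
  refine (hui.add hvi).mono' (hu.mul hv).sqrt.aestronglyMeasurable
    (Filter.Eventually.of_forall fun ω => ?_)
  rw [Real.norm_of_nonneg (Real.sqrt_nonneg _), Real.sqrt_le_iff]
  have h1 := hu0 ω
  have h2 := hv0 ω
  simp only [Pi.add_apply]
  exact ⟨by positivity, by nlinarith [mul_nonneg h1 h2]⟩

namespace GoodPair

/-- The logarithm of the exponential moment of `φ` under the density `p μ`. -/
noncomputable def logMoment (D : GoodPair Ω P E) (φ : Ω → ℝ) (μ : E) : ℝ :=
  Real.log (∫ ω, Real.exp (φ ω) * D.p μ ω ∂P)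

/-- The Hellinger affinity of the densities `p μ` and `p ν`. -/
noncomputable def affinity (D : GoodPair Ω P E) (μ ν : E) : ℝ :=
  ∫ ω, √(D.p μ ω * D.p ν ω) ∂P

variable (D : GoodPair Ω P E) {μ ν : E} {φ ψ : Ω → ℝ}

theorem integrable_p (hμ : μ ∈ D.M) : Integrable (D.p μ) P :=
  Integrable.of_integral_ne_zero (by rw [D.p_prob μ hμ]; exact one_ne_zero)

theorem integral_pos_of_pos (hμ : μ ∈ D.M) {u : Ω → ℝ} (hu : ∀ ω, 0 < u ω)
    (hui : Integrable u P) : 0 < ∫ ω, u ω ∂P := by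
  rw [integral_pos_iff_support_of_nonneg (fun ω => (hu ω).le) hui,
    show Function.support u = univ from eq_univ_of_forall fun ω => (hu ω).ne',
    Measure.measure_univ_pos]
  rintro rfl
  have h := D.p_prob μ hμ
  simp at h

theorem moment_pos (hμ : μ ∈ D.M) (hφ : φ ∈ D.F) :
    0 < ∫ ω, Real.exp (φ ω) * D.p μ ω ∂P :=
  D.integral_pos_of_pos hμ (fun ω => mul_pos (Real.exp_pos _) (D.p_pos μ hμ ω))
    (D.F_finite φ hφ μ hμ)

theorem exp_logMoment (hμ : μ ∈ D.M) (hφ : φ ∈ D.F) :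
    Real.exp (D.logMoment φ μ) = ∫ ω, Real.exp (φ ω) * D.p μ ω ∂P :=
  Real.exp_log (D.moment_pos hμ hφ)

theorem logMoment_convex (hμ : μ ∈ D.M) (hφ : φ ∈ D.F) (hψ : ψ ∈ D.F) {a b : ℝ} (ha : 0 ≤ a)
    (hb : 0 ≤ b) (hab : a + b = 1) :
    D.logMoment (a • φ + b • ψ) μ ≤ a * D.logMoment φ μ + b * D.logMoment ψ μ := by
  have hmem : a • φ + b • ψ ∈ D.F := D.F.add_mem (D.F.smul_mem a hφ) (D.F.smul_mem b hψ)
  rw [← Real.exp_le_exp, D.exp_logMoment hμ hmem]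
  set s := D.logMoment φ μ with hs
  set t := D.logMoment ψ μ with ht
  have hpt : ∀ ω, Real.exp ((a • φ + b • ψ) ω) * D.p μ ω ≤
      Real.exp (a * s + b * t) * (a * (Real.exp (-s) * (Real.exp (φ ω) * D.p μ ω)) +
        b * (Real.exp (-t) * (Real.exp (ψ ω) * D.p μ ω))) := fun ω => by
    have h := convexOn_exp.2 (mem_univ (φ ω - s)) (mem_univ (ψ ω - t)) ha hb hab
    simp only [smul_eq_mul] at h
    have h2 := mul_le_mul_of_nonneg_right
      (mul_le_mul_of_nonneg_left h (Real.exp_pos (a * s + b * t)).le) (D.p_pos μ hμ ω).le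
    rw [← Real.exp_add, sub_eq_neg_add (φ ω), sub_eq_neg_add (ψ ω), Real.exp_add (-s),
      Real.exp_add (-t)] at h2
    refine (le_of_eq ?_).trans (h2.trans (le_of_eq ?_))
    · congr 2
      simp only [Pi.add_apply, Pi.smul_apply, smul_eq_mul]
      ring
    · ring
  have h1 := ((D.F_finite φ hφ μ hμ).const_mul (Real.exp (-s))).const_mul a
  have h2 := ((D.F_finite ψ hψ μ hμ).const_mul (Real.exp (-t))).const_mul b
  refine (integral_mono (D.F_finite _ hmem μ hμ) ((h1.add h2).const_mul _) hpt).trans (le_of_eq ?_)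
  rw [integral_const_mul]
  simp only [Pi.add_apply]
  rw [integral_add h1 h2, integral_const_mul,
    integral_const_mul, integral_const_mul, integral_const_mul, ← D.exp_logMoment hμ hφ,
    ← D.exp_logMoment hμ hψ, ← hs, ← ht, ← Real.exp_add, ← Real.exp_add]
  simp [hab]

theorem integrable_affinity (hμ : μ ∈ D.M) (hν : ν ∈ D.M) :
    Integrable (fun ω => √(D.p μ ω * D.p ν ω)) P :=
  integrable_sqrt_mul (D.p_meas μ hμ) (D.p_meas ν hν) (fun ω => (D.p_pos μ hμ ω).le)
    (fun ω => (D.p_pos ν hν ω).le) (D.integrable_p hμ) (D.integrable_p hν)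

theorem affinity_pos (hμ : μ ∈ D.M) (hν : ν ∈ D.M) : 0 < D.affinity μ ν :=
  D.integral_pos_of_pos hμ
    (fun ω => Real.sqrt_pos.2 (mul_pos (D.p_pos μ hμ ω) (D.p_pos ν hν ω)))
    (D.integrable_affinity hμ hν)

theorem affinity_self (hμ : μ ∈ D.M) : D.affinity μ μ = 1 := by
  rw [affinity, ← D.p_prob μ hμ]
  exact integral_congr_ae (Filter.Eventually.of_forall fun ω =>
    Real.sqrt_mul_self (D.p_pos μ hμ ω).le)

theorem two_mul_log_affinity_le (hμ : μ ∈ D.M) (hν : ν ∈ D.M) (hφ : φ ∈ D.F) :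
    2 * Real.log (D.affinity μ ν) ≤ D.logMoment φ μ + D.logMoment (-φ) ν := by
  have hφ' : -φ ∈ D.F := D.F.neg_mem hφ
  have h := integral_sqrt_mul_le (Q := P)
    ((D.F_meas φ hφ).exp.mul (D.p_meas μ hμ)) ((D.F_meas _ hφ').exp.mul (D.p_meas ν hν))
    (fun ω => (mul_pos (Real.exp_pos _) (D.p_pos μ hμ ω)).le)
    (fun ω => (mul_pos (Real.exp_pos _) (D.p_pos ν hν ω)).le)
    (D.F_finite φ hφ μ hμ) (D.F_finite _ hφ' ν hν)
  have h1 : D.affinity μ ν ≤ √(∫ ω, Real.exp (φ ω) * D.p μ ω ∂P) *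
      √(∫ ω, Real.exp ((-φ) ω) * D.p ν ω ∂P) := by
    refine (le_of_eq ?_).trans h
    refine integral_congr_ae (Filter.Eventually.of_forall fun ω => ?_)
    have : Real.exp (φ ω) * Real.exp ((-φ) ω) = 1 := by rw [← Real.exp_add]; simp
    simp only [Pi.mul_apply]
    rw [mul_mul_mul_comm, this, one_mul]
  have h2 := Real.log_le_log (D.affinity_pos hμ hν) h1
  have p1 := D.moment_pos hμ hφ
  have p2 := D.moment_pos hν hφ'
  rw [Real.log_mul (Real.sqrt_pos.2 p1).ne' (Real.sqrt_pos.2 p2).ne', Real.log_sqrt p1.le,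
    Real.log_sqrt p2.le] at h2
  simp only [logMoment]
  linarith

/-- Half of the log-likelihood ratio attains the bound `two_mul_log_affinity_le`. -/
theorem exists_logMoment_eq (hμ : μ ∈ D.M) (hν : ν ∈ D.M) :
    ∃ φ ∈ D.F, D.logMoment φ μ = Real.log (D.affinity μ ν) ∧
      D.logMoment (-φ) ν = Real.log (D.affinity μ ν) := by
  have key : ∀ a b : ℝ, 0 < a → 0 < b → Real.exp (2⁻¹ * Real.log (b / a)) * a = √(a * b) := by
    intro a b ha hb
    rw [inv_mul_eq_div, ← Real.log_sqrt (by positivity), Real.exp_log (by positivity),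
      Real.sqrt_div hb.le, Real.sqrt_mul ha.le]
    have h := Real.mul_self_sqrt ha.le
    have h0 := (Real.sqrt_pos.2 ha).ne'
    field_simp
    nlinarith
  refine ⟨(2⁻¹ : ℝ) • fun ω => Real.log (D.p ν ω / D.p μ ω),
    D.F.smul_mem _ (D.logratio_mem ν hν μ hμ), ?_, ?_⟩
  · rw [logMoment, affinity]
    congr 2
    ext ω
    exact key _ _ (D.p_pos μ hμ ω) (D.p_pos ν hν ω)
  · rw [logMoment, affinity]
    congr 2
    ext ω
    rw [mul_comm (D.p μ ω), ← key _ _ (D.p_pos ν hν ω) (D.p_pos μ hμ ω), ← inv_div (D.p ν ω),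
      Real.log_inv]
    simp

theorem logMoment_add_neg_nonneg (hμ : μ ∈ D.M) (hφ : φ ∈ D.F) :
    0 ≤ D.logMoment φ μ + D.logMoment (-φ) μ := by
  simpa [D.affinity_self hμ] using D.two_mul_log_affinity_le hμ hμ hφ

theorem concaveOn_log_affinity (hμ : μ ∈ D.M) :
    ConcaveOn ℝ D.M fun ν => Real.log (D.affinity μ ν) := by
  refine ⟨D.M_convex, fun ν₁ h₁ ν₂ h₂ a b ha hb hab => ?_⟩
  have hν := D.M_convex h₁ h₂ ha hb hab
  obtain ⟨φ, hφ, e1, e2⟩ := D.exists_logMoment_eq hμ hν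
  have hc := (D.F_concave (-φ) (D.F.neg_mem hφ)).2 h₁ h₂ ha hb hab
  have k1 := mul_le_mul_of_nonneg_left (D.two_mul_log_affinity_le hμ h₁ hφ) ha
  have k2 := mul_le_mul_of_nonneg_left (D.two_mul_log_affinity_le hμ h₂ hφ) hb
  change a * D.logMoment (-φ) ν₁ + b * D.logMoment (-φ) ν₂ ≤ D.logMoment (-φ) _ at hc
  simp only [smul_eq_mul]
  have k3 : a * D.logMoment φ μ + b * D.logMoment φ μ = D.logMoment φ μ := by
    rw [← add_mul, hab, one_mul]
  linarith

theorem continuousOn_logMoment [FiniteDimensional ℝ E] (hφ : φ ∈ D.F) :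
    ContinuousOn (D.logMoment φ) D.M :=
  (D.F_concave φ hφ).continuousOn D.M_open

theorem continuousOn_affinity [FiniteDimensional ℝ E] (hμ : μ ∈ D.M) :
    ContinuousOn (D.affinity μ) D.M :=
  ((D.concaveOn_log_affinity hμ).continuousOn D.M_open).rexp.congr fun _ hν =>
    (Real.exp_log (D.affinity_pos hμ hν)).symm

theorem isProbabilityMeasure_obsMeasure (hμ : μ ∈ D.M) :
    IsProbabilityMeasure (obsMeasure D μ) := by
  refine ⟨?_⟩
  rw [obsMeasure, withDensity_apply _ MeasurableSet.univ, Measure.restrict_univ,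
    ← ofReal_integral_eq_lintegral_ofReal (D.integrable_p hμ)
      (Filter.Eventually.of_forall fun ω => (D.p_pos μ hμ ω).le), D.p_prob μ hμ, ENNReal.ofReal_one]

theorem obsMeasure_real_apply (hμ : μ ∈ D.M) {B : Set Ω} (hB : MeasurableSet B) :
    (obsMeasure D μ).real B = ∫ ω in B, D.p μ ω ∂P := by
  have h0 : ∀ ω, 0 ≤ D.p μ ω := fun ω => (D.p_pos μ hμ ω).le
  rw [Measure.real, obsMeasure, withDensity_apply _ hB,
    ← ofReal_integral_eq_lintegral_ofReal (D.integrable_p hμ).restrict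
      (Filter.Eventually.of_forall h0), ENNReal.toReal_ofReal (integral_nonneg h0)]

/-- The affinity bounds from below the error probabilities of every two-point test. -/
theorem affinity_le (hμ : μ ∈ D.M) (hν : ν ∈ D.M) {B : Set Ω} (hB : MeasurableSet B) :
    D.affinity μ ν ≤ √((obsMeasure D μ).real B) + √((obsMeasure D ν).real Bᶜ) := by
  have := D.isProbabilityMeasure_obsMeasure hμ
  have := D.isProbabilityMeasure_obsMeasure hν
  have hset : ∀ {C : Set Ω}, MeasurableSet C → ∫ ω in C, √(D.p μ ω * D.p ν ω) ∂P ≤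
      √((obsMeasure D μ).real C) * √((obsMeasure D ν).real C) := fun {C} hC => by
    rw [D.obsMeasure_real_apply hμ hC, D.obsMeasure_real_apply hν hC]
    exact integral_sqrt_mul_le (D.p_meas μ hμ) (D.p_meas ν hν) (fun ω => (D.p_pos μ hμ ω).le)
      (fun ω => (D.p_pos ν hν ω).le) (D.integrable_p hμ).restrict (D.integrable_p hν).restrict
  rw [affinity, ← integral_add_compl hB (D.integrable_affinity hμ hν)]
  have hle : ∀ {ξ : E} (_ : ξ ∈ D.M) (C : Set Ω), √((obsMeasure D ξ).real C) ≤ 1 := by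
    intro ξ hξ C
    have := D.isProbabilityMeasure_obsMeasure hξ
    exact Real.sqrt_le_one.2 measureReal_le_one
  refine add_le_add ((hset hB).trans ?_) ((hset hB.compl).trans ?_)
  · exact mul_le_of_le_one_right (Real.sqrt_nonneg _) (hle hν B)
  · exact mul_le_of_le_one_left (Real.sqrt_nonneg _) (hle hμ Bᶜ)

theorem exists_tail_lt [FiniteDimensional ℝ E] {C : Set E} (hC : IsCompact C) (hCM : C ⊆ D.M)
    {ghat : Ω → ℝ} (hg : Measurable ghat) {η : ℝ} (hη : 0 < η) :
    ∃ N : ℝ, ∀ μ ∈ C, (obsMeasure D μ).real {ω | N < |ghat ω|} < η := by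
  have hB : ∀ N : ℝ, MeasurableSet {ω | N < |ghat ω|} := fun N =>
    measurableSet_lt measurable_const hg.abs
  have hmono : ∀ {N N' : ℝ} {ν : E}, N ≤ N' → ν ∈ D.M →
      (obsMeasure D ν).real {ω | N < |ghat ω|} < η →
      (obsMeasure D ν).real {ω | N' < |ghat ω|} < η := fun {N N' ν} hN hν h => by
    have := D.isProbabilityMeasure_obsMeasure hν
    exact (measureReal_mono fun ω (hω : N' < |ghat ω|) => hN.trans_lt hω).trans_lt h
  suffices h : ∃ N : ℝ, ∀ μ ∈ C, μ ∈ D.M → (obsMeasure D μ).real {ω | N < |ghat ω|} < η by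
    obtain ⟨N, hN⟩ := h
    exact ⟨N, fun μ hμ => hN μ hμ (hCM hμ)⟩
  refine hC.induction_on (p := fun C' => ∃ N : ℝ, ∀ μ ∈ C', μ ∈ D.M →
    (obsMeasure D μ).real {ω | N < |ghat ω|} < η) ⟨0, by simp⟩ ?_ ?_ ?_
  · rintro a b hab ⟨N, hN⟩
    exact ⟨N, fun x hx => hN x (hab hx)⟩
  · rintro a b ⟨N, hN⟩ ⟨N', hN'⟩
    refine ⟨max N N', ?_⟩
    rintro x (hx | hx) hxM
    · exact hmono (le_max_left _ _) hxM (hN x hx hxM)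
    · exact hmono (le_max_right _ _) hxM (hN' x hx hxM)
  · intro μ hμ
    have hμM := hCM hμ
    have hprob := D.isProbabilityMeasure_obsMeasure hμM
    set τ := (1 - √(1 - η)) / 2 with hτ
    have hτ0 : 0 < τ := by
      have : √(1 - η) < 1 := by rw [Real.sqrt_lt' one_pos]; linarith
      linarith
    obtain ⟨N, hN⟩ : ∃ N : ℕ, (obsMeasure D μ).real {ω | (N : ℝ) < |ghat ω|} < τ ^ 2 := by
      have hlim : Filter.Tendsto (fun N : ℕ => obsMeasure D μ {ω | (N : ℝ) < |ghat ω|})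
          Filter.atTop (nhds (obsMeasure D μ (⋂ N : ℕ, {ω | (N : ℝ) < |ghat ω|}))) := by
        refine tendsto_measure_iInter_atTop (fun N => (hB N).nullMeasurableSet) ?_
          ⟨0, measure_ne_top _ _⟩
        intro i j hij ω (hω : (j : ℝ) < |ghat ω|)
        exact lt_of_le_of_lt (by exact_mod_cast hij) hω
      have hempty : (⋂ N : ℕ, {ω | (N : ℝ) < |ghat ω|}) = ∅ := by
        refine eq_empty_of_forall_notMem fun ω hω => ?_
        obtain ⟨N, hN⟩ := exists_nat_ge |ghat ω|
        exact (mem_iInter.1 hω N).not_ge hN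
      rw [hempty, measure_empty] at hlim
      have hpos : 0 < ENNReal.ofReal (τ ^ 2) := ENNReal.ofReal_pos.2 (by positivity)
      obtain ⟨N, hN⟩ := (hlim.eventually_lt_const hpos).exists
      exact ⟨N, ENNReal.toReal_lt_of_lt_ofReal hN⟩
    have hcont := (D.continuousOn_affinity hμM).continuousAt (D.M_open.mem_nhds hμM)
    have hev : ∀ᶠ ν in nhds μ, 1 - τ < D.affinity μ ν :=
      hcont.eventually_const_lt (by rw [D.affinity_self hμM]; linarith)
    refine ⟨{ν | 1 - τ < D.affinity μ ν}, mem_nhdsWithin_of_mem_nhds hev, N, ?_⟩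
    intro ν (hν : 1 - τ < D.affinity μ ν) hνM
    have hprobν := D.isProbabilityMeasure_obsMeasure hνM
    by_contra! hge
    have h := D.affinity_le hμM hνM (hB N)
    have h1 : √((obsMeasure D μ).real {ω | (N : ℝ) < |ghat ω|}) < τ := by
      rwa [Real.sqrt_lt' hτ0]
    have h2 : √((obsMeasure D ν).real {ω | (N : ℝ) < |ghat ω|}ᶜ) ≤ √(1 - η) := by
      rw [probReal_compl_eq_one_sub (hB N)]
      exact Real.sqrt_le_sqrt (by linarith)
    linarith

theorem perspective_convex (hμ : μ ∈ D.M) (hφ : φ ∈ D.F) (hψ : ψ ∈ D.F) {α β a b : ℝ} (hα : 0 < α)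
    (hβ : 0 < β) (ha : 0 ≤ a) (hb : 0 ≤ b) (hab : a + b = 1) :
    (a * α + b * β) * D.logMoment ((a * α + b * β)⁻¹ • (a • φ + b • ψ)) μ ≤
      a * (α * D.logMoment (α⁻¹ • φ) μ) + b * (β * D.logMoment (β⁻¹ • ψ) μ) := by
  have hγ : 0 < a * α + b * β := by
    rcases ha.eq_or_lt with rfl | ha'
    · rw [show b = 1 by linarith]; linarith
    · have := mul_pos ha' hα
      have := mul_nonneg hb hβ.le
      linarith
  set γ := a * α + b * β with hγdef
  have h := D.logMoment_convex hμ (D.F.smul_mem α⁻¹ hφ) (D.F.smul_mem β⁻¹ hψ)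
    (a := a * α / γ) (b := b * β / γ) (by positivity) (by positivity)
    (by rw [← add_div]; exact div_self hγ.ne')
  have he : (a * α / γ) • α⁻¹ • φ + (b * β / γ) • β⁻¹ • ψ = γ⁻¹ • (a • φ + b • ψ) := by
    rw [smul_add, smul_smul, smul_smul, smul_smul, smul_smul]
    congr 2 <;> field_simp
  rw [he] at h
  refine (mul_le_mul_of_nonneg_left h hγ.le).trans (le_of_eq ?_)
  field_simp

end GoodPair

theorem phiFun_eq (D : GoodPair Ω P E) (A : (Fin n → ℝ) →ᵃ[ℝ] E) (g : Fin n → ℝ) (r : ℝ)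
    (x y : Fin n → ℝ) (φ : Ω → ℝ) (α : ℝ) :
    PhiFun D A g r x y φ α = g ⬝ᵥ x - g ⬝ᵥ y + α * D.logMoment (α⁻¹ • φ) (A y)
      + α * D.logMoment (α⁻¹ • -φ) (A x) + 2 * α * r := by
  simp only [PhiFun, GoodPair.logMoment, Pi.smul_apply, Pi.neg_apply, smul_eq_mul,
    div_eq_inv_mul]

theorem phiFun_self_nonneg (D : GoodPair Ω P E) (A : (Fin n → ℝ) →ᵃ[ℝ] E) (g : Fin n → ℝ)
    {x : Fin n → ℝ} (hx : A x ∈ D.M) {φ : Ω → ℝ} (hφ : φ ∈ D.F) {α : ℝ} (hα : 0 < α) {r : ℝ}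
    (hr : 0 ≤ r) : 0 ≤ PhiFun D A g r x x φ α := by
  have h := D.logMoment_add_neg_nonneg hx (D.F.smul_mem α⁻¹ hφ)
  rw [phiFun_eq, smul_neg, sub_self, zero_add, ← mul_add]
  positivity

theorem convexOn_phiFun (D : GoodPair Ω P E) (A : (Fin n → ℝ) →ᵃ[ℝ] E) (g : Fin n → ℝ) (r : ℝ)
    {x y : Fin n → ℝ} (hx : A x ∈ D.M) (hy : A y ∈ D.M) :
    ConvexOn ℝ {w : (Ω → ℝ) × ℝ | w.1 ∈ D.F ∧ 0 < w.2}
      fun w => PhiFun D A g r x y w.1 w.2 := by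
  constructor
  · exact D.F.convex.prod (convex_Ioi (0 : ℝ))
  · rintro ⟨φ, α⟩ ⟨hφ, hα⟩ ⟨ψ, β⟩ ⟨hψ, hβ⟩ a b ha hb hab
    have h1 := D.perspective_convex hy hφ hψ hα hβ ha hb hab
    have h2 := D.perspective_convex hx (D.F.neg_mem hφ) (D.F.neg_mem hψ) hα hβ ha hb hab
    simp only [Prod.smul_mk, Prod.mk_add_mk, smul_eq_mul, phiFun_eq]
    rw [neg_add, ← smul_neg, ← smul_neg]
    have h3 : a * (g ⬝ᵥ x - g ⬝ᵥ y) + b * (g ⬝ᵥ x - g ⬝ᵥ y) = g ⬝ᵥ x - g ⬝ᵥ y := by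
      rw [← add_mul, hab, one_mul]
    linarith

theorem concaveOn_phiFun (D : GoodPair Ω P E) (A : (Fin n → ℝ) →ᵃ[ℝ] E) (g : Fin n → ℝ) (r : ℝ)
    {X : Set (Fin n → ℝ)} (hX : Convex ℝ X) (hA : ∀ x ∈ X, A x ∈ D.M) {φ : Ω → ℝ} (hφ : φ ∈ D.F)
    {α : ℝ} (hα : 0 < α) :
    ConcaveOn ℝ (X ×ˢ X) fun z => PhiFun D A g r z.1 z.2 φ α := by
  refine ⟨hX.prod hX, ?_⟩
  rintro ⟨x₁, y₁⟩ ⟨hx₁, hy₁⟩ ⟨x₂, y₂⟩ ⟨hx₂, hy₂⟩ a b ha hb hab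
  have h1 := (D.F_concave _ (D.F.smul_mem α⁻¹ hφ)).2 (hA _ hy₁) (hA _ hy₂) ha hb hab
  have h2 := (D.F_concave _ (D.F.smul_mem α⁻¹ (D.F.neg_mem hφ))).2 (hA _ hx₁) (hA _ hx₂) ha hb hab
  rw [← Convex.combo_affine_apply hab, smul_eq_mul, smul_eq_mul] at h1 h2
  have h1' := mul_le_mul_of_nonneg_left h1 hα.le
  have h2' := mul_le_mul_of_nonneg_left h2 hα.le
  simp only [Prod.smul_mk, Prod.mk_add_mk, smul_eq_mul, phiFun_eq, dotProduct_add,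
    dotProduct_smul, GoodPair.logMoment] at h1' h2' ⊢
  have h3 : a * (2 * α * r) + b * (2 * α * r) = 2 * α * r := by rw [← add_mul, hab, one_mul]
  linarith

theorem continuousOn_phiFun [FiniteDimensional ℝ E] (D : GoodPair Ω P E)
    (A : (Fin n → ℝ) →ᵃ[ℝ] E) (g : Fin n → ℝ) (r : ℝ) {X : Set (Fin n → ℝ)}
    (hA : ∀ x ∈ X, A x ∈ D.M) {φ : Ω → ℝ} (hφ : φ ∈ D.F) (α : ℝ) :
    ContinuousOn (fun z : (Fin n → ℝ) × (Fin n → ℝ) => PhiFun D A g r z.1 z.2 φ α) (X ×ˢ X) := by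
  simp only [phiFun_eq]
  have hAc := A.continuous_of_finiteDimensional
  have h1 : ContinuousOn (fun z : (Fin n → ℝ) × (Fin n → ℝ) => D.logMoment (α⁻¹ • φ) (A z.2))
      (X ×ˢ X) :=
    (D.continuousOn_logMoment (D.F.smul_mem α⁻¹ hφ)).comp (hAc.comp continuous_snd).continuousOn
      fun z hz => hA _ hz.2
  have h2 : ContinuousOn (fun z : (Fin n → ℝ) × (Fin n → ℝ) => D.logMoment (α⁻¹ • -φ) (A z.1))
      (X ×ˢ X) :=
    (D.continuousOn_logMoment (D.F.smul_mem α⁻¹ (D.F.neg_mem hφ))).comp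
      (hAc.comp continuous_fst).continuousOn fun z hz => hA _ hz.1
  have h3 : Continuous fun z : (Fin n → ℝ) × (Fin n → ℝ) => g ⬝ᵥ z.1 - g ⬝ᵥ z.2 :=
    (continuous_const.dotProduct continuous_fst).sub (continuous_const.dotProduct continuous_snd)
  exact ((h3.continuousOn.add (h1.const_mul α)).add (h2.const_mul α)).add continuousOn_const

theorem bddAbove_phiFun [FiniteDimensional ℝ E] (D : GoodPair Ω P E)
    (A : (Fin n → ℝ) →ᵃ[ℝ] E) (g : Fin n → ℝ) (r : ℝ) {X : Set (Fin n → ℝ)} (hX : IsCompact X)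
    (hA : ∀ x ∈ X, A x ∈ D.M) {φ : Ω → ℝ} (hφ : φ ∈ D.F) (α : ℝ) :
    BddAbove {w : ℝ | ∃ x ∈ X, ∃ y ∈ X, w = PhiFun D A g r x y φ α} := by
  refine ((hX.prod hX).bddAbove_image (continuousOn_phiFun D A g r hA hφ α)).mono ?_
  rintro w ⟨x, hx, y, hy, rfl⟩
  exact ⟨(x, y), ⟨hx, hy⟩, rfl⟩

theorem sSup_phiFun_nonneg [FiniteDimensional ℝ E] (D : GoodPair Ω P E)
    (A : (Fin n → ℝ) →ᵃ[ℝ] E) (g : Fin n → ℝ) {r : ℝ} (hr : 0 ≤ r) {X : Set (Fin n → ℝ)}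
    (hne : X.Nonempty) (hX : IsCompact X) (hA : ∀ x ∈ X, A x ∈ D.M) {φ : Ω → ℝ} (hφ : φ ∈ D.F)
    {α : ℝ} (hα : 0 < α) :
    0 ≤ sSup {w : ℝ | ∃ x ∈ X, ∃ y ∈ X, w = PhiFun D A g r x y φ α} := by
  obtain ⟨x, hx⟩ := hne
  exact (phiFun_self_nonneg D A g (hA x hx) hφ hα hr).trans
    (le_csSup (bddAbove_phiFun D A g r hX hA hφ α) ⟨x, hx, x, hx, rfl⟩)

theorem two_mul_phiStarIS_le [FiniteDimensional ℝ E] (D : GoodPair Ω P E)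
    (A : (Fin n → ℝ) →ᵃ[ℝ] E) (g : Fin n → ℝ) {r : ℝ} (hr : 0 ≤ r) {X : Set (Fin n → ℝ)}
    (hne : X.Nonempty) (hX : IsCompact X) (hA : ∀ x ∈ X, A x ∈ D.M) {φ : Ω → ℝ} (hφ : φ ∈ D.F)
    {α : ℝ} (hα : 0 < α) :
    2 * PhiStarIS D A g X r ≤ sSup {w : ℝ | ∃ x ∈ X, ∃ y ∈ X, w = PhiFun D A g r x y φ α} := by
  rw [PhiStarIS, ← mul_assoc, show (2 : ℝ) * (1 / 2) = 1 by norm_num, one_mul]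
  refine csInf_le ⟨0, ?_⟩ ⟨φ, hφ, α, hα, rfl⟩
  rintro v ⟨φ', hφ', α', hα', rfl⟩
  exact sSup_phiFun_nonneg D A g hr hne hX hA hφ' hα'

theorem le_two_mul_phiStarIS (D : GoodPair Ω P E) (A : (Fin n → ℝ) →ᵃ[ℝ] E) (g : Fin n → ℝ)
    {r c : ℝ} {X : Set (Fin n → ℝ)} (h : ∀ φ ∈ D.F, ∀ α : ℝ, 0 < α →
      c ≤ sSup {w : ℝ | ∃ x ∈ X, ∃ y ∈ X, w = PhiFun D A g r x y φ α}) :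
    c ≤ 2 * PhiStarIS D A g X r := by
  rw [PhiStarIS, ← mul_assoc, show (2 : ℝ) * (1 / 2) = 1 by norm_num, one_mul]
  refine le_csInf ⟨_, 0, D.F.zero_mem, 1, one_pos, rfl⟩ ?_
  rintro v ⟨φ, hφ, α, hα, rfl⟩
  exact h φ hφ α hα

theorem phiStarIS_mono [FiniteDimensional ℝ E] (D : GoodPair Ω P E)
    (A : (Fin n → ℝ) →ᵃ[ℝ] E) (g : Fin n → ℝ) {r : ℝ} (hr : 0 ≤ r) {X Y : Set (Fin n → ℝ)}
    (hXY : X ⊆ Y) (hne : X.Nonempty) (hX : IsCompact X) (hY : IsCompact Y)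
    (hA : ∀ x ∈ Y, A x ∈ D.M) : PhiStarIS D A g X r ≤ PhiStarIS D A g Y r := by
  have h : 2 * PhiStarIS D A g X r ≤ 2 * PhiStarIS D A g Y r := by
    refine le_two_mul_phiStarIS D A g fun φ hφ α hα => ?_
    refine (two_mul_phiStarIS_le D A g hr hne hX (fun x hx => hA x (hXY hx)) hφ hα).trans ?_
    obtain ⟨x₀, hx₀⟩ := hne
    refine csSup_le_csSup (bddAbove_phiFun D A g r hY hA hφ α) ⟨_, x₀, hx₀, x₀, hx₀, rfl⟩ ?_
    rintro w ⟨x, hx, y, hy, rfl⟩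
    exact ⟨x, hXY hx, y, hXY hy, rfl⟩
  linarith

/-- `Φ_*` is concave in `r` with `Φ_*(0) ≥ 0`, hence `Φ_*(r) / r` is nonincreasing. -/
theorem mul_phiStarIS_le [FiniteDimensional ℝ E] (D : GoodPair Ω P E)
    (A : (Fin n → ℝ) →ᵃ[ℝ] E) (g : Fin n → ℝ) {r s : ℝ} (hs : 0 < s) (hsr : s ≤ r)
    {X : Set (Fin n → ℝ)} (hne : X.Nonempty) (hX : IsCompact X) (hA : ∀ x ∈ X, A x ∈ D.M) :
    s * PhiStarIS D A g X r ≤ r * PhiStarIS D A g X s := by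
  have hr : 0 < r := hs.trans_le hsr
  have h : s / r * (2 * PhiStarIS D A g X r) ≤ 2 * PhiStarIS D A g X s := by
    refine le_two_mul_phiStarIS D A g fun φ hφ α hα => ?_
    have hbdd := bddAbove_phiFun D A g s hX hA hφ α
    set S := sSup {w : ℝ | ∃ x ∈ X, ∃ y ∈ X, w = PhiFun D A g s x y φ α} with hS
    have hdiff : ∀ x y, PhiFun D A g r x y φ α = PhiFun D A g s x y φ α + 2 * α * (r - s) :=
      fun x y => by simp only [PhiFun]; ring
    obtain ⟨x₀, hx₀⟩ := hne
    have hSs : 2 * α * s ≤ S := by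
      have h0 := phiFun_self_nonneg D A g (hA x₀ hx₀) hφ hα le_rfl
      have h1 : PhiFun D A g s x₀ x₀ φ α ≤ S := le_csSup hbdd ⟨x₀, hx₀, x₀, hx₀, rfl⟩
      have h2 : PhiFun D A g s x₀ x₀ φ α = PhiFun D A g 0 x₀ x₀ φ α + 2 * α * s := by
        simp only [PhiFun]; ring
      linarith
    have hle : 2 * PhiStarIS D A g X r ≤ S + 2 * α * (r - s) := by
      refine (two_mul_phiStarIS_le D A g hr.le ⟨x₀, hx₀⟩ hX hA hφ hα).trans ?_
      refine csSup_le ⟨_, x₀, hx₀, x₀, hx₀, rfl⟩ ?_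
      rintro w ⟨x, hx, y, hy, rfl⟩
      rw [hdiff]
      have := le_csSup hbdd ⟨x, hx, y, hy, rfl⟩
      linarith
    rw [div_mul_eq_mul_div, div_le_iff₀ hr]
    nlinarith [mul_le_mul_of_nonneg_left hle hs.le,
      mul_nonneg (sub_nonneg.2 hSs) (sub_nonneg.2 hsr)]
  rw [div_mul_eq_mul_div, div_le_iff₀ hr] at h
  linarith

theorem exists_forall_le_phiFun [FiniteDimensional ℝ E] (D : GoodPair Ω P E)
    (A : (Fin n → ℝ) →ᵃ[ℝ] E) (g : Fin n → ℝ) {r c : ℝ} (hr : 0 ≤ r) {X : Set (Fin n → ℝ)}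
    (hne : X.Nonempty) (hX : IsCompact X) (hXc : Convex ℝ X) (hA : ∀ x ∈ X, A x ∈ D.M)
    (hc : c < 2 * PhiStarIS D A g X r) :
    ∃ x ∈ X, ∃ y ∈ X, ∀ φ ∈ D.F, ∀ α : ℝ, 0 < α → c ≤ PhiFun D A g r x y φ α := by
  by_contra! hcon
  have hcon' : ∀ z ∈ X ×ˢ X, ∃ w ∈ {w : (Ω → ℝ) × ℝ | w.1 ∈ D.F ∧ 0 < w.2},
      PhiFun D A g r z.1 z.2 w.1 w.2 < c := fun z hz => by
    obtain ⟨φ, hφ, α, hα, h⟩ := hcon z.1 hz.1 z.2 hz.2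
    exact ⟨(φ, α), ⟨hφ, hα⟩, h⟩
  have hconv : ∀ z ∈ X ×ˢ X, ConvexOn ℝ {w : (Ω → ℝ) × ℝ | w.1 ∈ D.F ∧ 0 < w.2}
      fun w => PhiFun D A g r z.1 z.2 w.1 w.2 := fun z hz =>
    convexOn_phiFun D A g r (hA _ hz.1) (hA _ hz.2)
  have hconc : ∀ w ∈ {w : (Ω → ℝ) × ℝ | w.1 ∈ D.F ∧ 0 < w.2},
      ConcaveOn ℝ (X ×ˢ X) fun z => PhiFun D A g r z.1 z.2 w.1 w.2 := fun w hw =>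
    concaveOn_phiFun D A g r hXc hA hw.1 hw.2
  have hcont : ∀ w ∈ {w : (Ω → ℝ) × ℝ | w.1 ∈ D.F ∧ 0 < w.2},
      ContinuousOn (fun z => PhiFun D A g r z.1 z.2 w.1 w.2) (X ×ˢ X) := fun w hw =>
    continuousOn_phiFun D A g r hA hw.1 w.2
  obtain ⟨w, hw, hle⟩ := exists_forall_le_of_forall_exists_lt (hX.prod hX) (hne.prod hne)
    hcont hconc hconv hcon'
  refine hc.not_ge ((two_mul_phiStarIS_le D A g hr hne hX hA hw.1 hw.2).trans ?_)
  obtain ⟨x₀, hx₀⟩ := hne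
  refine csSup_le ⟨_, x₀, hx₀, x₀, hx₀, rfl⟩ ?_
  rintro v ⟨x, hx, y, hy, rfl⟩
  exact hle (x, y) ⟨hx, hy⟩

/-- Below the value `2Φ_*(r)` there are two signals which are hard to distinguish although the
values of the linear form at them differ a lot. -/
theorem exists_hard_pair [FiniteDimensional ℝ E] (D : GoodPair Ω P E)
    (A : (Fin n → ℝ) →ᵃ[ℝ] E) (g : Fin n → ℝ) {r c : ℝ} (hr : 0 ≤ r) {X : Set (Fin n → ℝ)}
    (hne : X.Nonempty) (hX : IsCompact X) (hXc : Convex ℝ X) (hA : ∀ x ∈ X, A x ∈ D.M)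
    (hc : c < 2 * PhiStarIS D A g X r) :
    ∃ x ∈ X, ∃ y ∈ X, c ≤ g ⬝ᵥ x - g ⬝ᵥ y ∧ Real.exp (-r) ≤ D.affinity (A y) (A x) := by
  obtain ⟨x, hx, y, hy, hxy⟩ := exists_forall_le_phiFun D A g hr hne hX hXc hA hc
  obtain ⟨φ, hφ, h1, h2⟩ := D.exists_logMoment_eq (hA y hy) (hA x hx)
  set h := Real.log (D.affinity (A y) (A x)) with hh
  have key : ∀ α : ℝ, 0 < α → c ≤ g ⬝ᵥ x - g ⬝ᵥ y + α * (2 * (h + r)) := fun α hα => by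
    have := hxy (α • φ) (D.F.smul_mem α hφ) α hα
    simp only [phiFun_eq, ← smul_neg, smul_smul, inv_mul_cancel₀ hα.ne', one_smul, h1, h2] at this
    linarith
  have hhr : 0 ≤ h + r := by
    by_contra! hneg
    have := key ((|g ⬝ᵥ x - g ⬝ᵥ y - c| + 1) / (-(2 * (h + r)))) (by
      apply div_pos <;> [positivity; linarith])
    rw [div_neg, neg_mul, div_mul_cancel₀ _ (show 2 * (h + r) < 0 by linarith).ne] at this
    linarith [le_abs_self (g ⬝ᵥ x - g ⬝ᵥ y - c)]
  refine ⟨x, hx, y, hy, ?_, ?_⟩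
  · refine le_of_forall_pos_le_add fun η hη => ?_
    refine (key (η / (2 * (h + r) + 1)) (by positivity)).trans ?_
    have : η / (2 * (h + r) + 1) * (2 * (h + r)) ≤ η := by
      rw [div_mul_eq_mul_div, div_le_iff₀ (by positivity)]
      nlinarith
    linarith
  · rw [← Real.exp_log (D.affinity_pos (hA y hy) (hA x hx))]
    exact Real.exp_le_exp.2 (by linarith)

theorem nonneg_of_iSup_lt (D : GoodPair Ω P E) (A : (Fin n → ℝ) →ᵃ[ℝ] E) (g : Fin n → ℝ)
    {X : Set (Fin n → ℝ)} (hne : X.Nonempty) (hA : ∀ x ∈ X, A x ∈ D.M) (ghat : Ω → ℝ) {ε : ℝ}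
    (hε : ε ≤ 1) {ρ : ℝ}
    (h : (⨆ x ∈ X, obsMeasure D (A x) {ω | ρ < |ghat ω - g ⬝ᵥ x|}) < ENNReal.ofReal ε) :
    0 ≤ ρ := by
  by_contra! hρ
  obtain ⟨x, hx⟩ := hne
  have := D.isProbabilityMeasure_obsMeasure (hA x hx)
  have h1 := (le_iSup₂
    (f := fun x _ => obsMeasure D (A x) {ω | ρ < |ghat ω - g ⬝ᵥ x|}) x hx).trans_lt h
  rw [show {ω | ρ < |ghat ω - g ⬝ᵥ x|} = univ from
    eq_univ_of_forall fun ω => hρ.trans_le (abs_nonneg _), measure_univ] at h1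
  exact h1.not_ge (ENNReal.ofReal_le_one.2 hε)

theorem risk_le (D : GoodPair Ω P E) (A : (Fin n → ℝ) →ᵃ[ℝ] E) (g : Fin n → ℝ)
    {X : Set (Fin n → ℝ)} (hne : X.Nonempty) (hA : ∀ x ∈ X, A x ∈ D.M) (ghat : Ω → ℝ) {ε : ℝ}
    (hε : ε ≤ 1) {ρ : ℝ}
    (h : (⨆ x ∈ X, obsMeasure D (A x) {ω | ρ < |ghat ω - g ⬝ᵥ x|}) < ENNReal.ofReal ε) :
    Risk D A g X ghat ε ≤ ρ :=
  csInf_le ⟨0, fun _ hρ' => nonneg_of_iSup_lt D A g hne hA ghat hε hρ'⟩ h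

/-- Over a compact signal set every estimate has finite risk. -/
theorem exists_iSup_lt [FiniteDimensional ℝ E] (D : GoodPair Ω P E) (A : (Fin n → ℝ) →ᵃ[ℝ] E)
    (g : Fin n → ℝ) {X : Set (Fin n → ℝ)} (hX : IsCompact X) (hA : ∀ x ∈ X, A x ∈ D.M)
    {ghat : Ω → ℝ} (hg : Measurable ghat) {ε : ℝ} (hε : 0 < ε) :
    ∃ ρ : ℝ, (⨆ x ∈ X, obsMeasure D (A x) {ω | ρ < |ghat ω - g ⬝ᵥ x|}) < ENNReal.ofReal ε := by
  obtain ⟨N, hN⟩ := D.exists_tail_lt (hX.image A.continuous_of_finiteDimensional)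
    (image_subset_iff.2 hA) hg (half_pos hε)
  obtain ⟨G, hG⟩ := hX.exists_bound_of_continuousOn (f := fun x => g ⬝ᵥ x)
    (continuous_const.dotProduct continuous_id).continuousOn
  refine ⟨N + G, lt_of_le_of_lt (iSup₂_le fun x hx => ?_)
    ((ENNReal.ofReal_lt_ofReal_iff hε).2 (half_lt_self hε))⟩
  have := D.isProbabilityMeasure_obsMeasure (hA x hx)
  refine (measure_mono fun ω hω => ?_).trans
    ((ENNReal.le_ofReal_iff_toReal_le (measure_ne_top _ _) (half_pos hε).le).2
      (hN (A x) (mem_image_of_mem A hx)).le)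
  have h1 := abs_sub (ghat ω) (g ⬝ᵥ x)
  have h2 := hG x hx
  rw [Real.norm_eq_abs] at h2
  simp only [mem_ofPred_eq] at hω ⊢
  linarith

theorem phiStarIS_le_risk [FiniteDimensional ℝ E] (D : GoodPair Ω P E)
    (A : (Fin n → ℝ) →ᵃ[ℝ] E) (g : Fin n → ℝ) {X : Set (Fin n → ℝ)} (hne : X.Nonempty)
    (hX : IsCompact X) (hXc : Convex ℝ X) (hA : ∀ x ∈ X, A x ∈ D.M) {ghat : Ω → ℝ}
    (hg : Measurable ghat) {ε : ℝ} (hε : ε ∈ Ioo (0 : ℝ) (1 / 4)) :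
    PhiStarIS D A g X (Real.log (1 / (4 * ε)) / 2) ≤ Risk D A g X ghat ε := by
  have hε0 := hε.1
  have hε1 := hε.2
  refine le_csInf (exists_iSup_lt D A g hX hA hg hε0) fun ρ hρ => ?_
  by_contra! hlt
  have hr : 0 ≤ Real.log (1 / (4 * ε)) / 2 :=
    div_nonneg (Real.log_nonneg (by rw [le_div_iff₀] <;> linarith)) two_pos.le
  obtain ⟨c, hc1, hc2⟩ := exists_between (show 2 * ρ < 2 * PhiStarIS D A g X
    (Real.log (1 / (4 * ε)) / 2) by linarith)
  obtain ⟨x, hx, y, hy, hcxy, haff⟩ := exists_hard_pair D A g hr hne hX hXc hA hc2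
  have hexp : Real.exp (-(Real.log (1 / (4 * ε)) / 2)) = √ε + √ε := by
    rw [← Real.log_sqrt (by positivity), ← Real.log_inv, Real.exp_log (by positivity),
      one_div, Real.sqrt_inv, inv_inv, Real.sqrt_mul (by norm_num),
      show (4 : ℝ) = 2 ^ 2 by norm_num, Real.sqrt_sq two_pos.le, two_mul]
  have herr : ∀ z ∈ X, ∀ B ⊆ {ω | ρ < |ghat ω - g ⬝ᵥ z|},
      √((obsMeasure D (A z)).real B) < √ε := by
    intro z hz B hB
    refine Real.sqrt_lt_sqrt measureReal_nonneg (ENNReal.toReal_lt_of_lt_ofReal ?_)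
    exact (measure_mono hB).trans_lt
      ((le_iSup₂ (f := fun z _ => obsMeasure D (A z) {ω | ρ < |ghat ω - g ⬝ᵥ z|}) z hz).trans_lt hρ)
  have hB : MeasurableSet {ω | (g ⬝ᵥ x + g ⬝ᵥ y) / 2 ≤ ghat ω} :=
    measurableSet_le measurable_const hg
  have h := D.affinity_le (hA y hy) (hA x hx) hB
  have h1 := herr y hy {ω | (g ⬝ᵥ x + g ⬝ᵥ y) / 2 ≤ ghat ω} fun ω hω => by
    simp only [mem_ofPred_eq] at hω ⊢
    exact lt_of_lt_of_le (by linarith) (le_abs_self _)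
  have h2 := herr x hx {ω | (g ⬝ᵥ x + g ⬝ᵥ y) / 2 ≤ ghat ω}ᶜ fun ω hω => by
    simp only [mem_ofPred_eq, mem_compl_iff, not_le] at hω ⊢
    exact lt_of_lt_of_le (by linarith) (neg_le_abs _)
  linarith

theorem phiStarIS_le_riskStar [FiniteDimensional ℝ E] (D : GoodPair Ω P E)
    (A : (Fin n → ℝ) →ᵃ[ℝ] E) (g : Fin n → ℝ) {X : Set (Fin n → ℝ)} (hne : X.Nonempty)
    (hX : IsCompact X) (hXc : Convex ℝ X) (hA : ∀ x ∈ X, A x ∈ D.M) {ε : ℝ}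
    (hε : ε ∈ Ioo (0 : ℝ) (1 / 4)) :
    PhiStarIS D A g X (Real.log (1 / (4 * ε)) / 2) ≤ RiskStar D A g X ε := by
  refine le_csInf ⟨_, fun _ => 0, measurable_const, rfl⟩ ?_
  rintro ρ ⟨ghat, hg, rfl⟩
  exact phiStarIS_le_risk D A g hne hX hXc hA hg hε

/-- If from the index `k` on all component estimates are accurate at `ω`, then so is the adaptive
estimate. -/
theorem abs_adaptEst_sub_le {Ω' : Type*} {K k : ℕ} (hk : k < K) {ghatk : ℕ → Ω' → ℝ}
    {thresh : ℕ → ℝ} {δ a : ℝ} {ω : Ω'} (hmono : ∀ j ≤ k, thresh j ≤ thresh k)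
    (h : ∀ j, k ≤ j → j < K → |ghatk j ω - a| ≤ thresh j + δ) :
    |adaptEst K ghatk thresh δ ω - a| ≤ 3 * thresh k + 3 * δ := by
  have hgood : isGoodIdx K ghatk thresh δ ω k := by
    refine ⟨hk, fun j hkj hj => ?_⟩
    have h1 := abs_sub_le (ghatk j ω) a (ghatk k ω)
    have h2 := h j hkj hj
    have h3 := h k le_rfl hk
    rw [abs_sub_comm] at h3
    linarith
  have hsel : isGoodIdx K ghatk thresh δ ω (kSel K ghatk thresh δ ω) :=
    Nat.sInf_mem (s := {k | isGoodIdx K ghatk thresh δ ω k}) ⟨k, hgood⟩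
  have hle : kSel K ghatk thresh δ ω ≤ k := Nat.sInf_le hgood
  have h1 := hsel.2 k hle hk
  have h2 := abs_sub_le (ghatk (kSel K ghatk thresh δ ω) ω) (ghatk k ω) a
  have h3 := h k le_rfl hk
  have h4 := hmono _ hle
  rw [abs_sub_comm] at h1
  rw [adaptEst]
  linarith

/-- **Proposition 5.1, bound (5.3).** In the adaptive estimation scheme, the
`ε`-risk of the Lepskii-type adaptive estimate `ĝ` on each `X^k` satisfies
`Risk^k(ĝ; ε) ≤ [6 ln(2K/ε)/ln(1/(4ε))]·Risk_*^k(ε) + 3δ`. -/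
theorem adaptive_estimate_risk
    {Ω : Type*} [MeasurableSpace Ω] [TopologicalSpace Ω] [PolishSpace Ω] [BorelSpace Ω]
    {P : Measure Ω} [SigmaFinite P] {m n : ℕ}
    (D : GoodPair Ω P (Fin m → ℝ))
    (K : ℕ) (hK : 1 ≤ K) (Xs : ℕ → Set (Fin n → ℝ))
    (hXne : ∀ k < K, (Xs k).Nonempty) (hXcp : ∀ k < K, IsCompact (Xs k))
    (hXcv : ∀ k < K, Convex ℝ (Xs k))
    (hnest : ∀ k k', k ≤ k' → k' < K → Xs k ⊆ Xs k')
    (A : (Fin n → ℝ) →ᵃ[ℝ] (Fin m → ℝ)) (hA : ∀ x ∈ Xs (K - 1), A x ∈ D.M)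
    (g : Fin n → ℝ) (ε : ℝ) (hε : ε ∈ Set.Ioo (0 : ℝ) (1/4)) (δ : ℝ) (hδ : 0 < δ)
    (ghatk : ℕ → Ω → ℝ) (hmeas : ∀ k < K, Measurable (ghatk k))
    (hrisk : ∀ k < K,
      (⨆ x ∈ Xs k, obsMeasure D (A x)
          {ω | PhiStarIS D A g (Xs k) (Real.log (2 * K / ε)) + δ < |ghatk k ω - g ⬝ᵥ x|})
        < ENNReal.ofReal (ε / K)) :
    ∀ k < K,
      Risk D A g (Xs k)
          (adaptEst K ghatk
            (fun j => PhiStarIS D A g (Xs j) (Real.log (2 * K / ε))) δ) ε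
        ≤ (6 * Real.log (2 * K / ε) / Real.log (1 / (4 * ε))) *
            RiskStar D A g (Xs k) ε + 3 * δ := by
  intro k hk
  have hε0 := hε.1
  have hε1 := hε.2
  have hK0 : (1 : ℝ) ≤ K := by exact_mod_cast hK
  set r := Real.log (2 * K / ε) with hr
  set L := Real.log (1 / (4 * ε)) with hL
  have hL0 : 0 < L := Real.log_pos (by rw [lt_div_iff₀] <;> linarith)
  have hLr : L ≤ r := by
    refine Real.log_le_log (by positivity) ?_
    rw [div_le_div_iff₀ (by positivity) hε0]
    nlinarith
  have hr0 : 0 < r := hL0.trans_le hLr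
  have hAk : ∀ j < K, ∀ x ∈ Xs j, A x ∈ D.M := fun j hj x hx =>
    hA x (hnest j (K - 1) (by omega) (by omega) hx)
  have hrisk' : Risk D A g (Xs k)
      (adaptEst K ghatk (fun j => PhiStarIS D A g (Xs j) r) δ) ε
        ≤ 3 * PhiStarIS D A g (Xs k) r + 3 * δ := by
    refine risk_le D A g (hXne k hk) (hAk k hk) _ (by linarith) ?_
    have hsum : ∑ j ∈ Finset.Ico k K, (⨆ x ∈ Xs j, obsMeasure D (A x)
        {ω | PhiStarIS D A g (Xs j) r + δ < |ghatk j ω - g ⬝ᵥ x|}) < ENNReal.ofReal ε := by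
      calc _ < ∑ j ∈ Finset.Ico k K, ENNReal.ofReal (ε / K) :=
            ENNReal.sum_lt_sum_of_nonempty (Finset.nonempty_Ico.2 hk)
              fun j hj => hrisk j (Finset.mem_Ico.1 hj).2
        _ ≤ ∑ j ∈ Finset.range K, ENNReal.ofReal (ε / K) :=
            Finset.sum_le_sum_of_subset fun j hj => Finset.mem_range.2 (Finset.mem_Ico.1 hj).2
        _ = ENNReal.ofReal ε := by
            rw [← ENNReal.ofReal_sum_of_nonneg fun _ _ => by positivity]
            simp only [Finset.sum_const, Finset.card_range, nsmul_eq_mul]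
            rw [mul_div_cancel₀ _ (by positivity)]
    refine lt_of_le_of_lt (iSup₂_le fun x hx => ?_) hsum
    have hsub : {ω | 3 * PhiStarIS D A g (Xs k) r + 3 * δ <
          |adaptEst K ghatk (fun j => PhiStarIS D A g (Xs j) r) δ ω - g ⬝ᵥ x|} ⊆
        ⋃ j ∈ Finset.Ico k K, {ω | PhiStarIS D A g (Xs j) r + δ < |ghatk j ω - g ⬝ᵥ x|} := by
      intro ω hω
      by_contra hnot
      simp only [mem_iUnion, Finset.mem_Ico, mem_ofPred_eq, not_exists, not_lt] at hnot
      refine (not_le.2 hω) (abs_adaptEst_sub_le hk (fun j hj => ?_) fun j hkj hj =>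
        hnot j ⟨hkj, hj⟩)
      exact phiStarIS_mono D A g hr0.le (hnest j k hj hk) (hXne j (hj.trans_lt hk))
        (hXcp j (hj.trans_lt hk)) (hXcp k hk) (hAk k hk)
    refine (measure_mono hsub).trans ((measure_biUnion_finset_le _ _).trans ?_)
    refine Finset.sum_le_sum fun j hj => ?_
    obtain ⟨hkj, hj⟩ := Finset.mem_Ico.1 hj
    exact le_iSup₂ (f := fun x _ => obsMeasure D (A x)
      {ω | PhiStarIS D A g (Xs j) r + δ < |ghatk j ω - g ⬝ᵥ x|}) x (hnest k j hkj hj hx)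
  refine hrisk'.trans (add_le_add_left ?_ _)
  have h1 := phiStarIS_le_riskStar D A g (hXne k hk) (hXcp k hk) (hXcv k hk) (hAk k hk) hε
  have h2 := mul_phiStarIS_le D A g (half_pos hL0) (by linarith : L / 2 ≤ r) (hXne k hk)
    (hXcp k hk) (hAk k hk)
  rw [div_mul_eq_mul_div, le_div_iff₀ hL0]
  nlinarith [mul_le_mul_of_nonneg_left h1 hr0.le]
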